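/- Let (g_m)_{m≥1} be a sequence of probability densities on [0,1] and set h_M = g_1 ∗ ··· ∗ g_M (circular convolution). If for every integer n ≠ 0 one has lim_{M→∞} ĝ_1(n)···ĝ_M(n) = 0, then lim_{M→∞} ∫₀¹ |h_M(x) − 1| dx = 0, i.e. h_M converges in L¹([0,1]) to the uniform density. -/

import Mathlib

open MeasureTheory Filter

noncomputable section

/-- A probability density on `[0,1]`: nonnegative, integrable, total integral one. -/
def IsProbDensity (g : ℝ → ℝ) : Prop :=
  (∀ x, 0 ≤ g x) ∧ IntegrableOn g (Set.Icc 0 1) ∧ (∫ x in (0:ℝ)..1, g x) = 1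

/-- Circular convolution on `[0,1]` (the argument is taken modulo 1). -/
def circConv (f g : ℝ → ℝ) : ℝ → ℝ :=
  fun x => ∫ y in (0:ℝ)..1, f y * g (Int.fract (x - y))

/-- The `n`-th Fourier coefficient of `g ∈ L¹([0,1])`. -/
def fourierCoeff01 (g : ℝ → ℝ) (n : ℤ) : ℂ :=
  ∫ x in (0:ℝ)..1, (g x : ℂ) * Complex.exp (-(2 * Real.pi * Complex.I) * n * x)

open AddCircle ContinuousLinearMap
open scoped Convolution Topology

section Circle

variable {T : ℝ} [hT : Fact (0 < T)]

theorem integral_norm_convolution_le {f g : AddCircle T → ℂ}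
    (hf : Integrable f haarAddCircle) (hg : Integrable g haarAddCircle) :
    ∫ x, ‖(f ⋆[mul ℂ ℂ, haarAddCircle] g) x‖ ∂haarAddCircle ≤
      (∫ x, ‖f x‖ ∂haarAddCircle) * ∫ x, ‖g x‖ ∂haarAddCircle := by
  have hc := integral_convolution (mul ℝ ℝ) hf.norm hg.norm
  rw [mul_apply'] at hc
  rw [← hc]
  refine integral_mono (hf.integrable_convolution _ hg).norm
    (hf.norm.integrable_convolution _ hg.norm) fun x => ?_
  refine (norm_integral_le_integral_norm _).trans_eq ?_
  simp [convolution_def]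

/-- Convolution with a fixed integrable function, as an operator on `L¹` of the circle. -/
def convL1 (g : AddCircle T → ℂ) (hg : Integrable g haarAddCircle) :
    Lp ℂ 1 (haarAddCircle (T := T)) →L[ℂ] Lp ℂ 1 (haarAddCircle (T := T)) :=
  LinearMap.mkContinuous
    { toFun := fun u => ((L1.integrable_coeFn u).integrable_convolution (mul ℂ ℂ) hg).toL1 _
      map_add' := fun u v => by
        rw [← Integrable.toL1_add, Integrable.toL1_eq_toL1_iff,
          convolution_congr _ (Lp.coeFn_add u v) (ae_eq_refl g)]
        filter_upwards [(L1.integrable_coeFn u).ae_convolution_exists (mul ℂ ℂ) hg,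
          (L1.integrable_coeFn v).ae_convolution_exists (mul ℂ ℂ) hg] with x hu hv
        exact hu.add_distrib hv
      map_smul' := fun c u => by
        rw [RingHom.id_apply, ← Integrable.toL1_smul', Integrable.toL1_eq_toL1_iff,
          convolution_congr _ (Lp.coeFn_smul c u) (ae_eq_refl g), smul_convolution] }
    (∫ x, ‖g x‖ ∂haarAddCircle) fun u => by
      simp only [LinearMap.coe_mk, AddHom.coe_mk]
      rw [L1.norm_of_fun_eq_integral_norm, L1.norm_eq_integral_norm, mul_comm]
      exact integral_norm_convolution_le (L1.integrable_coeFn u) hg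

theorem coeFn_convL1 (g : AddCircle T → ℂ) (hg : Integrable g haarAddCircle)
    (u : Lp ℂ 1 (haarAddCircle (T := T))) :
    convL1 g hg u =ᵐ[haarAddCircle] (u ⋆[mul ℂ ℂ, haarAddCircle] g) :=
  ((L1.integrable_coeFn u).integrable_convolution (mul ℂ ℂ) hg).coeFn_toL1

theorem convL1_toL1 {f g : AddCircle T → ℂ} (hf : Integrable f haarAddCircle)
    (hg : Integrable g haarAddCircle) :
    convL1 g hg (hf.toL1 f) = (hf.integrable_convolution (mul ℂ ℂ) hg).toL1 _ := by
  refine Lp.ext ((coeFn_convL1 g hg _).trans ?_)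
  rw [convolution_congr _ hf.coeFn_toL1 (ae_eq_refl g)]
  exact (Integrable.coeFn_toL1 _).symm

theorem norm_convL1_le (g : AddCircle T → ℂ) (hg : Integrable g haarAddCircle) :
    ‖convL1 g hg‖ ≤ ∫ x, ‖g x‖ ∂haarAddCircle :=
  LinearMap.mkContinuous_norm_le _ (integral_nonneg fun _ => norm_nonneg _) _

theorem fourier_sub_apply {T : ℝ} (n : ℤ) (x t : AddCircle T) :
    fourier n (x - t) = fourier n x * fourier (-n) t := by
  simp [sub_eq_add_neg, smul_add, toCircle_add]

theorem fourier_convolution (g : AddCircle T → ℂ) (n : ℤ) (x : AddCircle T) :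
    ((fourier n : AddCircle T → ℂ) ⋆[mul ℂ ℂ, haarAddCircle] g) x =
      fourierCoeff g n * fourier n x := by
  rw [convolution_eq_swap, fourierCoeff, ← integral_mul_const]
  refine integral_congr_ae (ae_of_all _ fun t => ?_)
  simp only [mul_apply', fourier_sub_apply, smul_eq_mul]
  ring

theorem convolution_sum_fourier {ι : Type*} (s : Finset ι) (c : ι → ℂ) (k : ι → ℤ)
    {f : AddCircle T → ℂ} (hf : Integrable f haarAddCircle) (x : AddCircle T) :
    (f ⋆[mul ℂ ℂ, haarAddCircle] fun y => ∑ i ∈ s, c i * fourier (k i) y) x =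
      ∑ i ∈ s, c i * fourierCoeff f (k i) * fourier (k i) x := by
  have key : ∀ t, mul ℂ ℂ (f t) (∑ i ∈ s, c i * fourier (k i) (x - t)) =
      ∑ i ∈ s, c i * fourier (k i) x * (fourier (-k i) t • f t) := fun t => by
    simp only [mul_apply', fourier_sub_apply, smul_eq_mul, Finset.mul_sum]
    exact Finset.sum_congr rfl fun i _ => by ring
  simp only [convolution_def, key]
  rw [integral_finsetSum _ fun i _ => (hf.fourier_smul _).const_mul _]
  refine Finset.sum_congr rfl fun i _ => ?_
  rw [integral_const_mul, fourierCoeff]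
  ring

theorem convL1_fourierLp (g : AddCircle T → ℂ) (hg : Integrable g haarAddCircle) (n : ℤ) :
    convL1 g hg (fourierLp 1 n) = fourierCoeff g n • fourierLp 1 n := by
  refine Lp.ext ((coeFn_convL1 g hg _).trans ?_)
  rw [convolution_congr _ (coeFn_fourierLp 1 n) (ae_eq_refl g)]
  filter_upwards [Lp.coeFn_smul (fourierCoeff g n) (fourierLp (T := T) 1 n),
    coeFn_fourierLp (T := T) 1 n] with x h1 h2
  rw [h1, Pi.smul_apply, h2, fourier_convolution, smul_eq_mul]

theorem convL1_sum_fourier {ι : Type*} (s : Finset ι) (c : ι → ℂ) (k : ι → ℤ)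
    (hg : Integrable (fun y : AddCircle T => ∑ i ∈ s, c i * fourier (k i) y) haarAddCircle)
    (u : Lp ℂ 1 (haarAddCircle (T := T))) :
    convL1 _ hg u = ∑ i ∈ s, (c i * fourierCoeff u (k i)) • fourierLp 1 (k i) := by
  refine Lp.ext ((coeFn_convL1 _ hg _).trans ?_)
  have h1 : ∀ᵐ x ∂(haarAddCircle (T := T)), ∀ i ∈ s,
      ((c i * fourierCoeff u (k i)) • fourierLp (T := T) 1 (k i)) x =
        c i * fourierCoeff u (k i) * fourier (k i) x := by
    refine (ae_ball_iff s.countable_toSet).2 fun i _ => ?_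
    filter_upwards [Lp.coeFn_smul (c i * fourierCoeff u (k i)) (fourierLp (T := T) 1 (k i)),
      coeFn_fourierLp (T := T) 1 (k i)] with x h1 h2
    rw [h1, Pi.smul_apply, h2, smul_eq_mul]
  filter_upwards [h1, Lp.coeFn_finsetSum s
    fun i => (c i * fourierCoeff u (k i)) • fourierLp (T := T) 1 (k i)] with x h1 h2
  rw [convolution_sum_fourier s c k (L1.integrable_coeFn u), h2, Finset.sum_apply]
  exact Finset.sum_congr rfl fun i hi => (h1 i hi).symm

/-- The Fejér kernel. -/
def fejerKernel (N : ℕ) (x : AddCircle T) : ℂ :=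
  ∑ p ∈ Finset.Ico (0 : ℤ) N ×ˢ Finset.Ico (0 : ℤ) N, (N : ℂ)⁻¹ * fourier (p.1 - p.2) x

theorem integrable_fejerKernel (N : ℕ) :
    Integrable (fejerKernel N : AddCircle T → ℂ) haarAddCircle :=
  (continuous_finsetSum _ fun _ _ => continuous_const.mul (map_continuous (fourier _))
    : Continuous _).integrable_of_hasCompactSupport (HasCompactSupport.of_compactSpace _)

theorem fourierCoeff_fejerKernel (N : ℕ) (n : ℤ) :
    fourierCoeff (fejerKernel N : AddCircle T → ℂ) n =
      (N : ℂ)⁻¹ * (Finset.Ico (max 0 n) (min N (N + n))).card := by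
  have h : (fejerKernel N : AddCircle T → ℂ) =
      ∑ p ∈ Finset.Ico (0 : ℤ) N ×ˢ Finset.Ico (0 : ℤ) N,
        (N : ℂ)⁻¹ • (fourier (p.1 - p.2) : AddCircle T → ℂ) := by
    ext x
    simp [fejerKernel]
  rw [h, fourierCoeff.sum _ _ fun p _ => (((map_continuous (fourier (T := T) (p.1 - p.2))
    ).integrable_of_hasCompactSupport (HasCompactSupport.of_compactSpace _)).smul _)]
  simp only [Finset.sum_apply, fourierCoeff.const_smul, fourierCoeff_fourier, smul_eq_mul,
    ← Finset.mul_sum, Pi.single_apply, Finset.sum_boole]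
  congr 2
  refine Finset.card_nbij' Prod.fst (fun i => (i, i - n)) ?_ ?_ ?_ ?_ <;>
    intro i hi <;> simp [Prod.ext_iff] at hi ⊢ <;> omega

theorem norm_fejerKernel {T : ℝ} (N : ℕ) (x : AddCircle T) :
    ((‖fejerKernel N x‖ : ℝ) : ℂ) = fejerKernel N x := by
  have h : fejerKernel N x =
      (((N : ℝ)⁻¹ * ‖∑ i ∈ Finset.Ico (0 : ℤ) N, fourier i x‖ ^ 2 : ℝ) : ℂ) := by
    push_cast
    rw [← Complex.mul_conj', map_sum, Finset.sum_mul_sum, ← Finset.sum_product', Finset.mul_sum,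
      fejerKernel]
    refine Finset.sum_congr rfl fun p _ => ?_
    rw [sub_eq_add_neg, fourier_add, fourier_neg]
  rw [h, Complex.norm_real, Real.norm_of_nonneg (by positivity)]

theorem integral_norm_fejerKernel {N : ℕ} (hN : N ≠ 0) :
    ∫ x : AddCircle T, ‖fejerKernel N x‖ ∂haarAddCircle = 1 := by
  have h := fourierCoeff_fejerKernel (T := T) N 0
  have hN' : (N : ℂ) ≠ 0 := Nat.cast_ne_zero.2 hN
  simp only [fourierCoeff, neg_zero, fourier_zero, one_smul] at h
  rw [← integral_congr_ae (ae_of_all _ (norm_fejerKernel N)), integral_complex_ofReal] at h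
  simp [hN'] at h
  exact_mod_cast h

theorem tendsto_fourierCoeff_fejerKernel (n : ℤ) :
    Tendsto (fun N => fourierCoeff (fejerKernel N : AddCircle T → ℂ) n) atTop (𝓝 1) := by
  have h1 : Tendsto (fun N : ℕ => ((1 - |n| * (N : ℝ)⁻¹ : ℝ) : ℂ)) atTop (𝓝 1) := by
    have := (tendsto_inv_atTop_nhds_zero_nat (𝕜 := ℝ)).const_mul (|n| : ℝ) |>.const_sub 1
    rw [mul_zero, sub_zero] at this
    exact_mod_cast (Complex.continuous_ofReal.tendsto 1).comp this
  refine h1.congr' ?_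
  filter_upwards [eventually_ge_atTop (n.natAbs + 1)] with N hN
  have hN' : (N : ℂ) ≠ 0 := Nat.cast_ne_zero.2 (by omega)
  have hc : (((Finset.Ico (max 0 n) (min N (N + n))).card : ℤ) : ℂ) = ((N - |n| : ℤ) : ℂ) := by
    congr 1
    rw [Int.card_Ico]
    rcases abs_cases n with h | h <;> omega
  rw [fourierCoeff_fejerKernel, ← Int.cast_natCast (Finset.card _), hc]
  rw [Int.cast_sub, Int.cast_natCast, ← Complex.ofReal_intCast |n|]
  push_cast
  field_simp

theorem tendsto_zero_of_mem_closure_span {E : Type*} [NormedAddCommGroup E] [NormedSpace ℂ E]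
    {S : Set E} {A : ℕ → E →L[ℂ] E} {C : ℝ} (hA : ∀ᶠ N in atTop, ‖A N‖ ≤ C)
    (hS : ∀ e ∈ S, Tendsto (fun N => A N e) atTop (𝓝 0)) {u : E}
    (hu : u ∈ (Submodule.span ℂ S).topologicalClosure) :
    Tendsto (fun N => A N u) atTop (𝓝 0) := by
  have hspan : ∀ p ∈ Submodule.span ℂ S, Tendsto (fun N => A N p) atTop (𝓝 0) := by
    intro p hp
    induction hp using Submodule.span_induction with
    | mem e he => exact hS e he
    | zero => simp
    | add x y _ _ hx hy => simpa using hx.add hy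
    | smul c x _ hx => simpa using hx.const_smul c
  rw [Metric.tendsto_atTop']
  intro ε hε
  have hC : 0 < |C| + 1 := by positivity
  obtain ⟨p, hp, hup⟩ := Metric.mem_closure_iff.1 hu (ε / 2 / (|C| + 1)) (by positivity)
  rw [dist_eq_norm, lt_div_iff₀ hC] at hup
  have h := hA.and ((Metric.tendsto_nhds.1 (hspan p hp)) (ε / 2) (by positivity))
  obtain ⟨N₀, hN₀⟩ := eventually_atTop.1 h
  refine ⟨N₀, fun N hN => ?_⟩
  obtain ⟨h1, h2⟩ := hN₀ N hN.le
  rw [dist_zero_right] at h2 ⊢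
  have h3 : ‖A N (u - p)‖ ≤ ‖u - p‖ * (|C| + 1) := by
    rw [mul_comm]
    exact (A N).le_of_opNorm_le (by linarith [le_abs_self C]) _
  calc ‖A N u‖ = ‖A N (u - p) + A N p‖ := by rw [map_sub, sub_add_cancel]
    _ ≤ ‖A N (u - p)‖ + ‖A N p‖ := norm_add_le _ _
    _ < ε := by linarith

/-- Convolution with the Fejér kernels converges strongly to the identity of `L¹`. -/
theorem tendsto_convL1_fejerKernel (u : Lp ℂ 1 (haarAddCircle (T := T))) :
    Tendsto (fun N => convL1 _ (integrable_fejerKernel N) u) atTop (𝓝 u) := by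
  rw [← tendsto_sub_nhds_zero_iff]
  refine tendsto_zero_of_mem_closure_span (C := 1 + 1) (S := Set.range (fourierLp (T := T) 1))
    (A := fun N => convL1 _ (integrable_fejerKernel N) - ContinuousLinearMap.id ℂ _) ?_ ?_ ?_
  · filter_upwards [eventually_ne_atTop 0] with N hN
    refine (norm_sub_le _ _).trans <| add_le_add ?_ norm_id_le
    exact (norm_convL1_le _ _).trans_eq (integral_norm_fejerKernel hN)
  · rintro _ ⟨n, rfl⟩
    simp only [sub_apply, convL1_fourierLp, ContinuousLinearMap.id_apply]
    rw [tendsto_sub_nhds_zero_iff]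
    simpa using (tendsto_fourierCoeff_fejerKernel (T := T) n).smul_const (fourierLp (T := T) 1 n)
  · rw [span_fourierLp_closure_eq_top ENNReal.one_ne_top]
    trivial

/-- An integrable function on the circle lies in the closed span of the monomials occurring in
its Fourier series. -/
theorem mem_closure_span_fourierLp (u : Lp ℂ 1 (haarAddCircle (T := T))) :
    u ∈ (Submodule.span ℂ
      (Set.image (fourierLp 1) {n | fourierCoeff u n ≠ 0})).topologicalClosure := by
  refine mem_closure_of_tendsto (tendsto_convL1_fejerKernel u) (Eventually.of_forall fun N => ?_)
  have h := convL1_sum_fourier _ _ _ (integrable_fejerKernel (T := T) N) u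
  rw [SetLike.mem_coe]
  refine (congrArg (· ∈ Submodule.span ℂ _) h).mpr (Submodule.sum_mem _ fun p _ => ?_)
  by_cases hp : fourierCoeff u (p.1 - p.2) = 0
  · rw [hp, mul_zero, zero_smul]
    exact Submodule.zero_mem _
  · exact Submodule.smul_mem _ _ (Submodule.subset_span ⟨_, hp, rfl⟩)

/-- The operator of successive convolution with `G 0, …, G (M - 1)`. -/
def iterConvL1 (G : ℕ → AddCircle T → ℂ) (hG : ∀ m, Integrable (G m) haarAddCircle) :
    ℕ → Lp ℂ 1 (haarAddCircle (T := T)) →L[ℂ] Lp ℂ 1 (haarAddCircle (T := T))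
  | 0 => ContinuousLinearMap.id ℂ _
  | M + 1 => (convL1 (G M) (hG M)).comp (iterConvL1 G hG M)

theorem norm_iterConvL1_le {G : ℕ → AddCircle T → ℂ} (hG : ∀ m, Integrable (G m) haarAddCircle)
    (hG1 : ∀ m, ∫ x, ‖G m x‖ ∂haarAddCircle ≤ 1) (M : ℕ) : ‖iterConvL1 G hG M‖ ≤ 1 := by
  induction M with
  | zero => exact norm_id_le
  | succ M ih =>
    refine (opNorm_comp_le _ _).trans (mul_le_one₀ ?_ (norm_nonneg _) ih)
    exact (norm_convL1_le _ _).trans (hG1 M)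

theorem iterConvL1_fourierLp {G : ℕ → AddCircle T → ℂ}
    (hG : ∀ m, Integrable (G m) haarAddCircle) (M : ℕ) (n : ℤ) :
    iterConvL1 G hG M (fourierLp 1 n) =
      (∏ m ∈ Finset.range M, fourierCoeff (G m) n) • fourierLp 1 n := by
  induction M with
  | zero => simp [iterConvL1]
  | succ M ih =>
    rw [iterConvL1, comp_apply, ih, map_smul, convL1_fourierLp, smul_smul, Finset.prod_range_succ]

theorem tendsto_iterConvL1 {G : ℕ → AddCircle T → ℂ}
    (hG : ∀ m, Integrable (G m) haarAddCircle)
    (hG1 : ∀ m, ∫ x, ‖G m x‖ ∂haarAddCircle ≤ 1) (u : Lp ℂ 1 (haarAddCircle (T := T)))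
    (hu : ∀ n, fourierCoeff u n ≠ 0 →
      Tendsto (fun M => ∏ m ∈ Finset.range M, fourierCoeff (G m) n) atTop (𝓝 0)) :
    Tendsto (fun M => iterConvL1 G hG M u) atTop (𝓝 0) := by
  refine tendsto_zero_of_mem_closure_span (Eventually.of_forall (norm_iterConvL1_le hG hG1)) ?_
    (mem_closure_span_fourierLp u)
  rintro _ ⟨n, hn, rfl⟩
  simp only [iterConvL1_fourierLp]
  simpa using (hu n hn).smul_const (fourierLp (T := T) 1 n)

end Circle

section Lift

/-- The function on the circle induced by the restriction of `g` to `[0, 1)`. -/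
def circleLift (g : ℝ → ℝ) : AddCircle (1 : ℝ) → ℂ :=
  Function.Periodic.lift (f := fun x => (g (Int.fract x) : ℂ)) fun x => by simp

theorem circleLift_coe (g : ℝ → ℝ) (x : ℝ) : circleLift g x = g (Int.fract x) := rfl

theorem integral_haarAddCircle_eq_intervalIntegral {E : Type*} [NormedAddCommGroup E]
    [NormedSpace ℝ E] (F : AddCircle (1 : ℝ) → E) :
    ∫ x, F x ∂haarAddCircle = ∫ x in (0 : ℝ)..1, F x := by
  rw [integral_haarAddCircle, inv_one, one_smul, ← AddCircle.intervalIntegral_preimage 1 0,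
    zero_add]

theorem integrable_circleLift {g : ℝ → ℝ} (hg : IntegrableOn g (Set.Icc 0 1)) :
    Integrable (circleLift g) haarAddCircle := by
  have h : circleLift g = AddCircle.liftIoc 1 0 fun x => (g (Int.fract x) : ℂ) := by
    ext x
    obtain ⟨a, ha, rfl⟩ : ∃ a ∈ Set.Ioc (0 : ℝ) (0 + 1), (a : AddCircle (1 : ℝ)) = x :=
      ⟨_, (AddCircle.equivIoc 1 0 x).2, AddCircle.coe_equivIoc⟩
    rw [AddCircle.liftIoc_coe_apply ha, circleLift_coe]
  rw [← memLp_one_iff_integrable, h]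
  refine MemLp.haarAddCircle (MemLp.memLp_liftIoc ?_)
  rw [memLp_one_iff_integrable, zero_add]
  refine Integrable.ofReal ?_
  change IntegrableOn _ _ _
  rw [← integrableOn_Icc_iff_integrableOn_Ioc, integrableOn_Icc_iff_integrableOn_Ico]
  refine (hg.mono_set Set.Ico_subset_Icc_self).congr_fun (fun x hx => ?_) measurableSet_Ico
  simp only [Int.fract_eq_self.2 hx]

theorem circleLift_circConv (f g : ℝ → ℝ) :
    circleLift (circConv f g) = circleLift f ⋆[mul ℂ ℂ, haarAddCircle] circleLift g := by
  ext x
  induction x using QuotientAddGroup.induction_on with | H a => ?_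
  rw [circleLift_coe, convolution_def, integral_haarAddCircle_eq_intervalIntegral, circConv,
    ← intervalIntegral.integral_ofReal]
  refine intervalIntegral.integral_congr_Ioo_of_le zero_le_one fun y hy => ?_
  have hfr : Int.fract (Int.fract a - y) = Int.fract (a - y) :=
    Int.fract_eq_fract.2 ⟨-⌊a⌋, by rw [Int.fract]; push_cast; ring⟩
  simp only [← AddCircle.coe_sub, circleLift_coe, mul_apply', hfr,
    Int.fract_eq_self.2 ⟨hy.1.le, hy.2⟩, Complex.ofReal_mul]

theorem fourierCoeff_circleLift (g : ℝ → ℝ) (n : ℤ) :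
    fourierCoeff (circleLift g) n = fourierCoeff01 g n := by
  rw [fourierCoeff, integral_haarAddCircle_eq_intervalIntegral, fourierCoeff01]
  refine intervalIntegral.integral_congr_Ioo_of_le zero_le_one fun y hy => ?_
  simp only [circleLift_coe, fourier_coe_apply, Int.fract_eq_self.2 ⟨hy.1.le, hy.2⟩, smul_eq_mul]
  rw [mul_comm]
  congr 2
  push_cast
  ring

theorem IsProbDensity.integral_norm_circleLift {g : ℝ → ℝ} (hg : IsProbDensity g) :
    ∫ x, ‖circleLift g x‖ ∂haarAddCircle = 1 := by
  rw [integral_haarAddCircle_eq_intervalIntegral]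
  refine Eq.trans ?_ hg.2.2
  refine intervalIntegral.integral_congr_Ioo_of_le zero_le_one fun y hy => ?_
  simp only [circleLift_coe, Int.fract_eq_self.2 ⟨hy.1.le, hy.2⟩, Complex.norm_real,
    Real.norm_of_nonneg (hg.1 y)]

theorem IsProbDensity.fourierCoeff01_zero {g : ℝ → ℝ} (hg : IsProbDensity g) :
    fourierCoeff01 g 0 = 1 := by
  simp [fourierCoeff01, intervalIntegral.integral_ofReal, hg.2.2]

theorem norm_toL1_circleLift_sub_one {f : ℝ → ℝ}
    (hf : Integrable (circleLift f) haarAddCircle) :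
    ‖hf.toL1 _ - fourierLp 1 0‖ = ∫ x in (0 : ℝ)..1, |f x - 1| := by
  have h : ∀ᵐ x ∂haarAddCircle,
      ‖(hf.toL1 _ - fourierLp 1 0 : Lp ℂ 1 haarAddCircle) x‖ = ‖circleLift f x - 1‖ := by
    filter_upwards [Lp.coeFn_sub (hf.toL1 _) (fourierLp 1 0), hf.coeFn_toL1,
      coeFn_fourierLp (T := 1) 1 0] with x h1 h2 h3
    rw [h1, Pi.sub_apply, h2, h3, fourier_zero]
  rw [L1.norm_eq_integral_norm, integral_congr_ae h, integral_haarAddCircle_eq_intervalIntegral]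
  refine intervalIntegral.integral_congr_Ioo_of_le zero_le_one fun y hy => ?_
  simp only [circleLift_coe, Int.fract_eq_self.2 ⟨hy.1.le, hy.2⟩]
  rw [← Complex.ofReal_one, ← Complex.ofReal_sub, Complex.norm_real, Real.norm_eq_abs]

theorem fourierCoeff_toL1_circleLift_sub_one {f : ℝ → ℝ}
    (hf : Integrable (circleLift f) haarAddCircle) (n : ℤ) :
    fourierCoeff (hf.toL1 _ - fourierLp 1 0 : Lp ℂ 1 haarAddCircle) n =
      fourierCoeff01 f n - (Pi.single 0 1 : ℤ → ℂ) n := by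
  have h : (hf.toL1 _ - fourierLp 1 0 : Lp ℂ 1 haarAddCircle) =ᵐ[haarAddCircle]
      circleLift f + (-1 : ℂ) • (fourier 0 : AddCircle (1 : ℝ) → ℂ) := by
    filter_upwards [Lp.coeFn_sub (hf.toL1 _) (fourierLp 1 0), hf.coeFn_toL1,
      coeFn_fourierLp (T := 1) 1 0] with x h1 h2 h3
    rw [h1, Pi.sub_apply, h2, h3]
    simp [sub_eq_add_neg]
  have hi : Integrable (fourier 0 : AddCircle (1 : ℝ) → ℂ) haarAddCircle :=
    (map_continuous _).integrable_of_hasCompactSupport (HasCompactSupport.of_compactSpace _)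
  rw [fourierCoeff_congr_ae h, fourierCoeff.add hf (hi.smul _), Pi.add_apply,
    fourierCoeff.const_smul, fourierCoeff_fourier, fourierCoeff_circleLift]
  simp [sub_eq_add_neg]

end Lift

/-- If for every nonzero integer `n` the products of Fourier coefficients
`ĝ₁(n)⋯ĝ_M(n)` tend to `0`, then the circular convolutions `h M = g 1 ∗ ⋯ ∗ g M`
converge in `L¹([0,1])` to the uniform density `1`. -/
theorem modOneCLT_sufficiency (g : ℕ → ℝ → ℝ) (hg : ∀ m, 1 ≤ m → IsProbDensity (g m))
    (h : ℕ → ℝ → ℝ) (h1 : h 1 = g 1)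
    (hrec : ∀ M, 1 ≤ M → h (M + 1) = circConv (h M) (g (M + 1)))
    (hfour : ∀ n : ℤ, n ≠ 0 →
      Tendsto (fun M => ∏ m ∈ Finset.Icc 1 M, fourierCoeff01 (g m) n) atTop (nhds 0)) :
    Tendsto (fun M => ∫ x in (0:ℝ)..1, |h M x - 1|) atTop (nhds 0) := by
  have hG : ∀ m, Integrable (circleLift (g (m + 2))) haarAddCircle := fun m =>
    integrable_circleLift (hg _ (by omega)).2.1
  have hstep : ∀ M, circleLift (h (M + 2)) =
      circleLift (h (M + 1)) ⋆[mul ℂ ℂ, haarAddCircle] circleLift (g (M + 2)) := fun M => by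
    rw [hrec (M + 1) (by omega), circleLift_circConv]
  have hH : ∀ M, Integrable (circleLift (h (M + 1))) haarAddCircle := by
    intro M
    induction M with
    | zero =>
      rw [zero_add, h1]
      exact integrable_circleLift (hg 1 le_rfl).2.1
    | succ M ih =>
      rw [hstep]
      exact ih.integrable_convolution _ (hG M)
  have hiter : ∀ M, iterConvL1 _ hG M ((hH 0).toL1 _) = (hH M).toL1 _ := by
    intro M
    induction M with
    | zero => rfl
    | succ M ih =>
      rw [iterConvL1, comp_apply, ih, convL1_toL1, Integrable.toL1_eq_toL1_iff, ← hstep]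
  have hone : ∀ M, iterConvL1 _ hG M (fourierLp 1 0) = fourierLp 1 0 := fun M => by
    rw [iterConvL1_fourierLp, Finset.prod_eq_one, one_smul]
    intro m _
    rw [fourierCoeff_circleLift, (hg _ (by omega)).fourierCoeff01_zero]
  have key := tendsto_iterConvL1 hG
    (fun m => (hg _ (by omega)).integral_norm_circleLift.le) ((hH 0).toL1 _ - fourierLp 1 0) ?_
  · simp only [map_sub, hiter, hone] at key
    rw [← tendsto_add_atTop_iff_nat 1]
    simpa only [norm_toL1_circleLift_sub_one, norm_zero] using key.norm
  · intro n hn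
    rw [fourierCoeff_toL1_circleLift_sub_one, zero_add, h1] at hn
    rcases eq_or_ne n 0 with rfl | hn0
    · simp [(hg 1 le_rfl).fourierCoeff01_zero] at hn
    rw [Pi.single_eq_of_ne hn0, sub_zero] at hn
    have hlim := ((hfour n hn0).comp (tendsto_add_atTop_nat 1)).const_mul
      (fourierCoeff01 (g 1) n)⁻¹
    rw [mul_zero] at hlim
    refine hlim.congr fun M => ?_
    simp only [Function.comp_apply, fourierCoeff_circleLift]
    rw [← Finset.Ico_add_one_right_eq_Icc, Finset.prod_Ico_eq_prod_range, Nat.add_sub_cancel,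
      Finset.prod_range_succ', add_zero, mul_comm, mul_inv_cancel_right₀ hn]
    exact Finset.prod_congr rfl fun m _ => by rw [show 1 + (m + 1) = m + 2 by omega]

end
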